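/- arXiv:1911.00785 — 2 statements merged into one kernel-verified Lean document; each statement's English description precedes it below -/
import Mathlib

section
/- Suppose G ↷ X has the uniform topological Markov property. Let k ∈ ℕ and (x₁,…,x_k,x_{k+1}) ∈ X^{k+1} be such that (x_k,x_{k+1}) is an asymptotic pair. Then (x₁,…,x_k) is an orbit IE-tuple if and only if (x₁,…,x_k,x_{k+1}) is an orbit IE-tuple. -/
open Pointwise

/-- Supremum over `g ∈ K` of `ρ (g • x) (g • y)`. -/
noncomputable def supOf {G X : Type*} [SMul G X] (ρ : X → X → ℝ) (K : Set G) (x y : X) : ℝ :=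
  ⨆ g : K, ρ ((g : G) • x) ((g : G) • y)

/-- `d_K(x,y) = sup_{g ∈ K} d(g x, g y)`. -/
noncomputable def supD {G X : Type*} [SMul G X] [PseudoMetricSpace X] (K : Set G) (x y : X) : ℝ :=
  supOf dist K x y

/-- `B` is an `(ε,δ)`-memory set for `A`. -/
def IsMemorySet (G X : Type*) [SMul G X] [PseudoMetricSpace X] (ε δ : ℝ)
    (A B : Finset G) : Prop :=
  (A : Set G) ⊆ (B : Set G) ∧
    ∀ x y : X, supD ((B : Set G) \ (A : Set G)) x y ≤ δ →
      ∃ z : X, supD (B : Set G) x z ≤ ε ∧ supD (Set.univ \ (A : Set G)) y z ≤ ε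

/-- The topological Markov property. -/
def TMP (G X : Type*) [SMul G X] [PseudoMetricSpace X] : Prop :=
  ∀ ε > (0 : ℝ), ∃ δ > (0 : ℝ), ∀ A : Finset G, ∃ B : Finset G, IsMemorySet G X ε δ A B

/-- The strong topological Markov property. -/
def StrongTMP (G X : Type*) [Group G] [DecidableEq G] [MulAction G X]
    [PseudoMetricSpace X] : Prop :=
  ∀ ε > (0 : ℝ), ∃ δ > (0 : ℝ), ∃ F : Finset G, (1 : G) ∈ F ∧
    ∀ A : Finset G, IsMemorySet G X ε δ A (F * A)

/-- `V` is `B`-separated. -/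
def Separated {G : Type*} [Mul G] (B V : Set G) : Prop :=
  ∀ v₁ ∈ V, ∀ v₂ ∈ V, v₁ ≠ v₂ → Disjoint (B * ({v₁} : Set G)) (B * ({v₂} : Set G))

/-- `B` is a uniform `(ε,δ)`-memory set for `A`. -/
def IsUniformMemorySet (G X : Type*) [Group G] [MulAction G X] [PseudoMetricSpace X]
    (ε δ : ℝ) (A B : Finset G) : Prop :=
  IsMemorySet G X ε δ A B ∧
    ∀ V : Finset G, Separated (B : Set G) (V : Set G) →
      ∀ (xv : G → X) (y : X),
        (∀ v ∈ V, supD (((B : Set G) \ (A : Set G)) * ({v} : Set G)) (xv v) y ≤ δ) →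
        ∃ z : X, (∀ v ∈ V, supD ((B : Set G) * ({v} : Set G)) z (xv v) ≤ ε) ∧
          supD (Set.univ \ ((A : Set G) * (V : Set G))) z y ≤ ε

/-- The uniform topological Markov property. -/
def UniformTMP (G X : Type*) [Group G] [MulAction G X] [PseudoMetricSpace X] : Prop :=
  ∀ ε > (0 : ℝ), ∃ δ > (0 : ℝ), ∀ A : Finset G, ∃ B : Finset G,
    IsUniformMemorySet G X ε δ A B

/-- The uniform strong topological Markov property. -/
def UniformStrongTMP (G X : Type*) [Group G] [DecidableEq G] [MulAction G X]
    [PseudoMetricSpace X] : Prop :=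
  ∀ ε > (0 : ℝ), ∃ δ > (0 : ℝ), ∃ F : Finset G, (1 : G) ∈ F ∧
    ∀ A : Finset G, IsUniformMemorySet G X ε δ A (F * A)

/-- Expansivity of the action. -/
def Expansive (G X : Type*) [SMul G X] [PseudoMetricSpace X] : Prop :=
  ∃ c > (0 : ℝ), ∀ x y : X, x ≠ y → ∃ g : G, dist (g • x) (g • y) > c

/-- `(x,y)` is an asymptotic pair. -/
def Asymptotic (G : Type*) {X : Type*} [SMul G X] [PseudoMetricSpace X] (x y : X) : Prop :=
  ∀ ε > (0 : ℝ), ∃ F : Finset G, ∀ g ∉ F, dist (g • x) (g • y) ≤ ε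

/-- `(S,δ)` pseudo-orbit. -/
def IsPseudoOrbit {G X : Type*} [Mul G] [SMul G X] [PseudoMetricSpace X]
    (S : Finset G) (δ : ℝ) (w : G → X) : Prop :=
  ∀ s ∈ S, ∀ g : G, dist (s • w g) (w (s * g)) < δ

/-- `w` is `ε`-traced by `x`. -/
def Traces {G X : Type*} [SMul G X] [PseudoMetricSpace X] (ε : ℝ) (x : X) (w : G → X) : Prop :=
  ∀ g : G, dist (g • x) (w g) ≤ ε

/-- Pseudo-orbit tracing property. -/
def POTP (G X : Type*) [Mul G] [SMul G X] [PseudoMetricSpace X] : Prop :=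
  ∀ ε > (0 : ℝ), ∃ δ > (0 : ℝ), ∃ S : Finset G, ∀ w : G → X,
    IsPseudoOrbit S δ w → ∃ x : X, Traces ε x w

/-- `J` is an independence set for the tuple `U`. -/
def IndepSet {G X : Type*} [SMul G X] {n : ℕ} (U : Fin n → Set X) (J : Set G) : Prop :=
  ∀ I : Finset G, (I : Set G) ⊆ J → I.Nonempty → ∀ φ : G → Fin n,
    (⋂ s ∈ I, (fun x : X => s • x) ⁻¹' U (φ s)).Nonempty

/-- The tuple `U` has positive independence density. -/
def PosIndepDensity (G : Type*) {X : Type*} [SMul G X] {n : ℕ} (U : Fin n → Set X) : Prop :=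
  ∃ q > (0 : ℝ), ∀ F : Finset G, ∃ J : Finset G, J ⊆ F ∧
    q * (F.card : ℝ) ≤ (J.card : ℝ) ∧ IndepSet U (J : Set G)

/-- Orbit IE-tuple. -/
def IETuple (G : Type*) {X : Type*} [SMul G X] [TopologicalSpace X] {n : ℕ}
    (x : Fin n → X) : Prop :=
  ∀ U : Fin n → Set X, (∀ i, IsOpen (U i)) → (∀ i, x i ∈ U i) → PosIndepDensity G U

/-- Minimality of the action. -/
def MinimalAction (G X : Type*) [SMul G X] [TopologicalSpace X] : Prop :=
  ∀ Y : Set X, IsClosed Y → (∀ g : G, ∀ y ∈ Y, g • y ∈ Y) → Y.Nonempty → Y = Set.univ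

/-- Følner sequence. -/
def FolnerSeq (G : Type*) [Group G] [DecidableEq G] (F : ℕ → Finset G) : Prop :=
  (∀ n, (F n).Nonempty) ∧
    ∀ K : Finset G, Filter.Tendsto
      (fun n => ((symmDiff (K * F n) (F n)).card : ℝ) / ((F n).card : ℝ))
      Filter.atTop (nhds 0)

/-
The main step replaces every point `x i` of an IE-tuple by an asymptotic point `y i`. Let `A` be a
finite set off which the orbits of `x i` and `y i` are close, for all `i`, and let `B` be a uniform
memory set for `A`. If `w` realizes an independence pattern for small Bowen balls about the `x i`,
and the pattern asks for `x i` at `v`, then `w` is close to `v⁻¹ • y i` along `B v` outside `A v`.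
After thinning the independence set to a `B`-separated one, which costs only a constant factor of
its density, the uniform Markov property patches all these translates into `w` at once. Prolonging
the tuple is then a matter of repeating the coordinate `x i` first and replacing the copy by `y`.
-/

section SupD

variable {G X : Type*}

theorem supD_eq_sSup_image [SMul G X] [PseudoMetricSpace X] (K : Set G) (x y : X) :
    supD K x y = sSup ((fun g : G => dist (g • x) (g • y)) '' K) :=
  congrArg sSup (Set.image_eq_range (fun g : G => dist (g • x) (g • y)) K).symm

theorem supD_le [SMul G X] [PseudoMetricSpace X] {K : Set G} {x y : X} {δ : ℝ} (hδ : 0 ≤ δ)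
    (h : ∀ g ∈ K, dist (g • x) (g • y) ≤ δ) : supD K x y ≤ δ :=
  Real.iSup_le (fun g => h g g.2) hδ

theorem dist_smul_smul_le_supD [SMul G X] [PseudoMetricSpace X] {K : Set G} (hK : K.Finite)
    {g : G} (hg : g ∈ K) (x y : X) : dist (g • x) (g • y) ≤ supD K x y :=
  have := hK.to_subtype
  le_ciSup (f := fun g : K => dist ((g : G) • x) ((g : G) • y)) (Set.finite_range _).bddAbove
    ⟨g, hg⟩

theorem supD_mul_singleton [Monoid G] [MulAction G X] [PseudoMetricSpace X] (K : Set G) (v : G)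
    (x y : X) : supD (K * {v}) x y = supD K (v • x) (v • y) := by
  simp only [supD_eq_sSup_image, Set.mul_singleton, Set.image_image, mul_smul]

end SupD

section Asymptotic

variable {G X : Type*} [SMul G X] [PseudoMetricSpace X]

theorem Asymptotic.refl (x : X) : Asymptotic G x x :=
  fun _ hε => ⟨∅, fun _ _ => (dist_self _).trans_le hε.le⟩

theorem exists_finset_forall_dist_smul_le {ι : Type*} [Finite ι] {x y : ι → X}
    (h : ∀ i, Asymptotic G (x i) (y i)) {ε : ℝ} (hε : 0 < ε) :
    ∃ F : Finset G, ∀ i, ∀ g ∉ F, dist (g • x i) (g • y i) ≤ ε := by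
  classical
  have := Fintype.ofFinite ι
  choose F hF using fun i => h i ε hε
  refine ⟨Finset.univ.biUnion F, fun i g hg => hF i g fun hgi => hg ?_⟩
  exact Finset.mem_biUnion.2 ⟨i, Finset.mem_univ i, hgi⟩

end Asymptotic

section Separated

variable {G : Type*}

theorem separated_iff_pairwiseDisjoint [Mul G] {B V : Set G} :
    Separated B V ↔ V.PairwiseDisjoint fun v => B * {v} :=
  Iff.rfl

theorem mem_inv_mul_mul_singleton_of_not_disjoint [Group G] {B : Set G} {g h : G}
    (hgh : ¬Disjoint (B * {g}) (B * {h})) : g ∈ B⁻¹ * B * {h} := by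
  simp only [Set.not_disjoint_iff, Set.mul_singleton, Set.mem_image] at hgh
  obtain ⟨_, ⟨b, hb, rfl⟩, c, hc, hcb⟩ := hgh
  refine ⟨b⁻¹ * c, Set.mul_mem_mul (Set.inv_mem_inv.2 hb) hc, h, rfl, ?_⟩
  simp only [mul_assoc, hcb, inv_mul_cancel_left]

theorem exists_separated_subset_inv_mul_mul [Group G] [DecidableEq G] {B : Finset G}
    (hB : B.Nonempty) (J : Finset G) :
    ∃ S ⊆ J, Separated (B : Set G) (S : Set G) ∧ J ⊆ B⁻¹ * B * S := by
  classical
  obtain ⟨S, hS⟩ :=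
    (J.powerset.filter fun S : Finset G => Separated (B : Set G) (S : Set G)).exists_maximal
      ⟨∅, by simp [Separated]⟩
  simp only [Finset.mem_filter, Finset.mem_powerset] at hS
  obtain ⟨hSJ, hsep⟩ := hS.prop
  refine ⟨S, hSJ, hsep, fun j hj => ?_⟩
  by_cases hdisj : ∀ s ∈ S, Disjoint ((B : Set G) * {j}) ((B : Set G) * {s})
  · have hinsert : Separated (B : Set G) (insert j S : Finset G) := by
      rw [Finset.coe_insert]
      exact (separated_iff_pairwiseDisjoint.1 hsep).insert fun s hs _ => hdisj s hs
    have hjS : j ∈ S := hS.le_of_ge ⟨Finset.insert_subset hj hSJ, hinsert⟩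
      (Finset.subset_insert j S) (Finset.mem_insert_self j S)
    obtain ⟨b, hb⟩ := hB
    exact Finset.mem_mul.2 ⟨b⁻¹ * b, Finset.mul_mem_mul (Finset.inv_mem_inv hb) hb, j, hjS, by simp⟩
  · push Not at hdisj
    obtain ⟨s, hs, hjs⟩ := hdisj
    have hmem : j ∈ (B : Set G)⁻¹ * B * S := Set.mul_subset_mul_left (Set.singleton_subset_iff.2 hs)
      (mem_inv_mul_mul_singleton_of_not_disjoint hjs)
    exact_mod_cast hmem

end Separated

section Independence

variable {G X : Type*} {m n : ℕ}

theorem IndepSet.mono [SMul G X] {U V : Fin n → Set X} {J : Set G} (hJ : IndepSet U J)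
    (hUV : ∀ i, U i ⊆ V i) : IndepSet V J :=
  fun I hIJ hI φ => (hJ I hIJ hI φ).mono <|
    Set.iInter₂_mono fun s _ => Set.preimage_mono (hUV (φ s))

theorem IndepSet.subset [SMul G X] {U : Fin n → Set X} {J K : Set G} (hJ : IndepSet U J)
    (hKJ : K ⊆ J) : IndepSet U K :=
  fun I hIK => hJ I (hIK.trans hKJ)

theorem IndepSet.comp [SMul G X] {U : Fin n → Set X} {J : Set G} (hJ : IndepSet U J)
    (f : Fin m → Fin n) : IndepSet (U ∘ f) J :=
  fun I hIJ hI φ => hJ I hIJ hI (f ∘ φ)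

theorem PosIndepDensity.of_separated [Group G] [MulAction G X] {U : Fin n → Set X}
    {V : Fin m → Set X} (hU : PosIndepDensity G U) {B : Finset G} (hB : B.Nonempty)
    (hUV : ∀ S : Finset G, Separated (B : Set G) (S : Set G) → IndepSet U (S : Set G) →
      IndepSet V (S : Set G)) :
    PosIndepDensity G V := by
  classical
  obtain ⟨q, hq, hqJ⟩ := hU
  have hc : (0 : ℝ) < (B⁻¹ * B).card := Nat.cast_pos.2 (hB.inv.mul hB).card_pos
  refine ⟨q / (B⁻¹ * B).card, div_pos hq hc, fun F => ?_⟩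
  obtain ⟨J, hJF, hcard, hJ⟩ := hqJ F
  obtain ⟨S, hSJ, hsep, hcover⟩ := exists_separated_subset_inv_mul_mul hB J
  refine ⟨S, hSJ.trans hJF, ?_, hUV S hsep (hJ.subset (Finset.coe_subset.2 hSJ))⟩
  rw [div_mul_eq_mul_div, div_le_iff₀' hc]
  calc q * F.card ≤ J.card := hcard
    _ ≤ (B⁻¹ * B * S).card := by gcongr
    _ ≤ (B⁻¹ * B).card * S.card := by exact_mod_cast Finset.card_mul_le

theorem IETuple.comp [SMul G X] [TopologicalSpace X] {x : Fin n → X} (hx : IETuple G x)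
    (f : Fin m → Fin n) : IETuple G (x ∘ f) := by
  intro U hU hxU
  obtain ⟨q, hq, hqJ⟩ := hx (fun i => ⋂ (j) (_ : f j = i), U j)
    (fun i => isOpen_iInter_of_finite fun j => isOpen_iInter_of_finite fun _ => hU j)
    (fun i => Set.mem_iInter₂.2 fun j hj => hj ▸ hxU j)
  refine ⟨q, hq, fun F => ?_⟩
  obtain ⟨J, hJF, hcard, hJ⟩ := hqJ F
  exact ⟨J, hJF, hcard, (hJ.comp f).mono fun j =>
    Set.iInter₂_subset (s := fun k (_ : f k = f j) => U k) j rfl⟩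

end Independence

section BowenBall

variable {G X : Type*} [SMul G X] [PseudoMetricSpace X]

/-- The open Bowen ball of radius `r` about `x` along `K`: the points whose translates by the
elements of `K` are at distance less than `r` from those of `x`. It serves as a neighbourhood of `x`
that controls finitely many translates. The strict inequality is required for each element of `K`,
not of `supD K p x`. -/
def bowenBall (K : Set G) (x : X) (r : ℝ) : Set X :=
  {p | ∀ g ∈ K, dist (g • p) (g • x) < r}

theorem mem_bowenBall_self (K : Set G) (x : X) {r : ℝ} (hr : 0 < r) : x ∈ bowenBall K x r :=
  fun _ _ => (dist_self _).trans_lt hr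

theorem isOpen_bowenBall (hcont : ∀ g : G, Continuous fun x : X => g • x) {K : Set G}
    (hK : K.Finite) (x : X) (r : ℝ) : IsOpen (bowenBall K x r) := by
  simp only [bowenBall, Set.ofPred_forall]
  exact hK.isOpen_biInter fun g _ => Metric.isOpen_ball.preimage (hcont g)

end BowenBall

section Markov

variable {G X : Type*} [Group G] [MulAction G X] [PseudoMetricSpace X] {n : ℕ} {x y : Fin n → X}

theorem IsUniformMemorySet.indepSet_closedBall {ε δ : ℝ} {A B : Finset G}
    (hAB : IsUniformMemorySet G X ε δ A B) (h1 : 1 ∈ B) (hδ : 0 ≤ δ)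
    (hxy : ∀ i, ∀ g ∉ A, dist (g • x i) (g • y i) ≤ δ / 2) {J : Set G}
    (hsep : Separated (B : Set G) J)
    (hJ : IndepSet (fun i => bowenBall (B : Set G) (x i) (δ / 2)) J) :
    IndepSet (fun i => Metric.closedBall (y i) ε) J := by
  intro I hIJ hI φ
  obtain ⟨w, hw⟩ := hJ I hIJ hI φ
  have hnear : ∀ v ∈ I,
      supD (((B : Set G) \ (A : Set G)) * {v}) (v⁻¹ • y (φ v)) w ≤ δ := by
    intro v hv
    rw [supD_mul_singleton, smul_inv_smul]
    refine supD_le hδ fun g hg => ?_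
    calc dist (g • y (φ v)) (g • v • w)
        ≤ dist (g • y (φ v)) (g • x (φ v)) + dist (g • v • w) (g • x (φ v)) :=
          dist_triangle_right _ _ _
      _ ≤ δ / 2 + δ / 2 := add_le_add ((dist_comm _ _).trans_le (hxy _ g hg.2))
          (Set.mem_iInter₂.1 hw v hv g hg.1).le
      _ = δ := add_halves δ
  obtain ⟨z, hz, -⟩ := hAB.2 I ((separated_iff_pairwiseDisjoint.1 hsep).subset hIJ)
    (fun v => v⁻¹ • y (φ v)) w hnear
  refine ⟨z, Set.mem_iInter₂.2 fun v hv => ?_⟩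
  have hzv := hz v hv
  rw [supD_mul_singleton, smul_inv_smul] at hzv
  simpa only [Set.mem_preimage, Metric.mem_closedBall, one_smul] using
    (dist_smul_smul_le_supD B.finite_toSet h1 _ _).trans hzv

theorem IETuple.of_asymptotic (hcont : ∀ g : G, Continuous fun x : X => g • x)
    (hutmp : UniformTMP G X) (hx : IETuple G x) (hxy : ∀ i, Asymptotic G (x i) (y i)) :
    IETuple G y := by
  classical
  intro U hU hyU
  obtain ⟨ε, hεU, hε⟩ : ∃ ε, (∀ i, Metric.closedBall (y i) ε ⊆ U i) ∧ 0 < ε :=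
    ((Filter.eventually_all.2 fun i =>
      eventually_closedBall_subset ((hU i).mem_nhds (hyU i))).and_frequently
        (frequently_gt_nhds 0)).exists
  obtain ⟨δ, hδ, hmem⟩ := hutmp ε hε
  obtain ⟨F, hF⟩ := exists_finset_forall_dist_smul_le hxy (half_pos hδ)
  obtain ⟨B, hB⟩ := hmem (insert 1 F)
  have h1 : 1 ∈ B := hB.1.1 (Finset.mem_insert_self 1 F)
  have hdens : PosIndepDensity G fun i => bowenBall (B : Set G) (x i) (δ / 2) :=
    hx _ (fun i => isOpen_bowenBall hcont B.finite_toSet (x i) (δ / 2))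
      fun i => mem_bowenBall_self _ (x i) (half_pos hδ)
  refine hdens.of_separated ⟨1, h1⟩ fun S hsep hS => ?_
  have hfar : ∀ i, ∀ g ∉ insert 1 F, dist (g • x i) (g • y i) ≤ δ / 2 :=
    fun i g hg => hF i g fun hgF => hg (Finset.mem_insert_of_mem hgF)
  exact (hB.indepSet_closedBall h1 hδ.le hfar hsep hS).mono hεU

theorem stmt11_general (hcont : ∀ g : G, Continuous fun x : X => g • x) (hutmp : UniformTMP G X)
    {i : Fin n} {p : X} (hasym : Asymptotic G (x i) p) :
    IETuple G x ↔ IETuple G (Fin.snoc x p : Fin (n + 1) → X) := by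
  constructor
  · intro hx
    refine (hx.comp (Fin.snoc id i)).of_asymptotic hcont hutmp (Fin.lastCases ?_ fun j => ?_)
    · simpa only [Function.comp_apply, Fin.snoc_last] using hasym
    · simpa only [Function.comp_apply, Fin.snoc_castSucc, id_eq] using Asymptotic.refl (x j)
  · intro hxp
    simpa only [Function.comp_def, Fin.snoc_castSucc] using hxp.comp Fin.castSucc

end Markov

/-- Suppose `G ↷ X` has the uniform TMP.  If `(x_k, y)` is an asymptotic
pair, then `(x₁,…,x_k)` is an orbit IE-tuple iff `(x₁,…,x_k,y)` is an orbit IE-tuple. -/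
theorem stmt11 (G X : Type*) [Group G] [Countable G] [Infinite G]
    [MetricSpace X] [CompactSpace X] [MulAction G X]
    (hcont : ∀ g : G, Continuous fun x : X => g • x)
    (hutmp : UniformTMP G X)
    (n : ℕ) (x : Fin (n + 1) → X) (y : X)
    (hasym : Asymptotic G (x (Fin.last n)) y) :
    IETuple G x ↔ IETuple G (Fin.snoc x y) :=
  stmt11_general hcont hutmp hasym
end

section
/- Let G ↷ X be an action with the mean topological Markov property. Then for every k ≥ 2 and every ε > 0, every orbit IE-tuple of length k lies in the closure of the set A_k^ε(X,G) of ε-asymptotic k-tuples. -/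
open Pointwise

/-- The mean topological Markov property. -/
def MeanTMP (G X : Type*) [Group G] [DecidableEq G] [MulAction G X]
    [PseudoMetricSpace X] : Prop :=
  ∀ ε > (0 : ℝ), ∃ δ > (0 : ℝ), ∃ Fs : ℕ → Finset G,
    Monotone Fs ∧ (⋃ n, (Fs n : Set G)) = Set.univ ∧
    ∃ Bs : ℕ → Finset G, (∀ n, IsMemorySet G X ε δ (Fs n) (Bs n)) ∧
      Filter.Tendsto (fun n => (((Bs n \ Fs n).card : ℝ) / ((Fs n).card : ℝ)))
        Filter.atTop (nhds 0)

/-- `(x₁,…,x_k)` is an `ε`-asymptotic tuple. -/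
def EpsAsymTuple (G : Type*) {X : Type*} [SMul G X] [PseudoMetricSpace X] {k : ℕ}
    (ε : ℝ) (x : Fin k → X) : Prop :=
  ∃ F : Finset G, ∀ g ∉ F, ∀ i j : Fin k, dist (g • x i) (g • x j) ≤ ε

/-!
An independence set `J` inside a large finite set `A` yields `k ^ |J|` points, one for each pattern
`φ : J → Fin k`. Colour `X` with finitely many colours, each class having diameter less than `δ`,
and record for each of these points the colours along its orbit over `B \ A`, where `B` is a memory
set for `A`. As `|B \ A|` is negligible compared with `|J|`, some record is shared by more than
`(k - 1) ^ |J|` patterns, so at some coordinate `s ∈ J` these patterns take all `k` values. The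
memory property replaces the corresponding `k` points by points that follow them over `A` and all
follow one and the same point off `A`; translating by `s` gives the `ε`-asymptotic tuple.
-/

section OrbitDistance

variable {G X : Type*} [SMul G X] [PseudoMetricSpace X]

lemma supD_le_iff [BoundedSpace X] {K : Set G} {x y : X} {r : ℝ} (hr : 0 ≤ r) :
    supD K x y ≤ r ↔ ∀ g ∈ K, dist (g • x) (g • y) ≤ r := by
  have hbdd : BddAbove (Set.range fun g : K => dist ((g : G) • x) ((g : G) • y)) :=
    ⟨Metric.diam (Set.univ : Set X), Set.forall_mem_range.2 fun _ =>
      Metric.dist_le_diam_of_mem BoundedSpace.bounded_univ (Set.mem_univ _) (Set.mem_univ _)⟩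
  exact ⟨fun h g hg => (le_ciSup hbdd ⟨g, hg⟩).trans h,
    fun h => Real.iSup_le (fun g => h g g.2) hr⟩

lemma IsMemorySet.exists_glue [BoundedSpace X] {ε δ : ℝ} {A B : Finset G}
    (hB : IsMemorySet G X ε δ A B) (hε : 0 ≤ ε) (hδ : 0 ≤ δ) {x y : X}
    (hxy : ∀ g ∈ B, g ∉ A → dist (g • x) (g • y) ≤ δ) :
    ∃ z : X, (∀ g ∈ B, dist (g • x) (g • z) ≤ ε) ∧ ∀ g ∉ A, dist (g • y) (g • z) ≤ ε := by
  obtain ⟨z, hxz, hyz⟩ := hB.2 x y ((supD_le_iff hδ).2 fun g hg => hxy g hg.1 hg.2)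
  exact ⟨z, (supD_le_iff hε).1 hxz,
    fun g hg => (supD_le_iff hε).1 hyz g ⟨Set.mem_univ g, hg⟩⟩

end OrbitDistance

section AsymptoticTuples

variable {G X : Type*} [PseudoMetricSpace X] {k : ℕ} {ε : ℝ} {x : Fin k → X}

lemma EpsAsymTuple.mono [SMul G X] {ε' : ℝ} (hx : EpsAsymTuple G ε x) (h : ε ≤ ε') :
    EpsAsymTuple G ε' x :=
  let ⟨F, hF⟩ := hx
  ⟨F, fun g hg i j => (hF g hg i j).trans h⟩

lemma EpsAsymTuple.smul [Group G] [MulAction G X] (hx : EpsAsymTuple G ε x) (s : G) :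
    EpsAsymTuple G ε (s • x) := by
  classical
  obtain ⟨F, hF⟩ := hx
  refine ⟨F.image (· * s⁻¹), fun g hg i j => ?_⟩
  have hgs : g * s ∉ F := fun h => hg (Finset.mem_image.2 ⟨g * s, h, mul_inv_cancel_right g s⟩)
  simpa only [Pi.smul_apply, smul_smul] using hF (g * s) hgs i j

end AsymptoticTuples

lemma IndepSet.exists_forall_smul_mem {G X : Type*} [SMul G X] {n : ℕ} {U : Fin n → Set X}
    {J : Finset G} (hJ : IndepSet U (J : Set G)) (hne : J.Nonempty) (φ : J → Fin n) :
    ∃ y : X, ∀ s : J, (s : G) • y ∈ U (φ s) := by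
  obtain ⟨s₀, hs₀⟩ := hne
  obtain ⟨y, hy⟩ := hJ J subset_rfl ⟨s₀, hs₀⟩
    (Function.extend Subtype.val φ fun _ => φ ⟨s₀, hs₀⟩)
  refine ⟨y, fun s => ?_⟩
  simpa only [Set.mem_preimage, Subtype.val_injective.extend_apply] using
    Set.mem_iInter₂.1 hy s s.2

lemma exists_coloring_of_totallyBounded {X : Type*} [PseudoMetricSpace X]
    (hX : TotallyBounded (Set.univ : Set X)) {δ : ℝ} (hδ : 0 < δ) :
    ∃ (M : ℕ) (c : X → Fin M), ∀ y z, c y = c z → dist y z < δ := by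
  obtain ⟨t, ht, hcover⟩ := Metric.totallyBounded_iff.1 hX (δ / 2) (half_pos hδ)
  have hcenter : ∀ y : X, ∃ a : t, dist y a < δ / 2 := fun y => by
    simpa using hcover (Set.mem_univ y)
  choose center hdist using hcenter
  have := ht.to_subtype
  obtain ⟨M, ⟨e⟩⟩ := Finite.exists_equiv_fin t
  refine ⟨M, e ∘ center, fun y z hyz => ?_⟩
  have hz : dist z (center y) < δ / 2 := e.injective hyz ▸ hdist z
  calc dist y z ≤ dist y (center y) + dist z (center y) := dist_triangle_right _ _ _
    _ < δ / 2 + δ / 2 := add_lt_add (hdist y) hz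
    _ = δ := add_halves δ

section Counting

lemma exists_eval_surjective_of_card_lt {J ι : Type*} [Fintype J] [Fintype ι]
    (S : Finset (J → ι)) (hS : (Fintype.card ι - 1) ^ Fintype.card J < S.card) :
    ∃ s : J, ∀ i : ι, ∃ φ ∈ S, φ s = i := by
  classical
  by_contra! hmissed
  choose i hi using hmissed
  have hsub : S ⊆ Fintype.piFinset fun s => Finset.univ.erase (i s) := fun φ hφ =>
    Fintype.mem_piFinset.2 fun s => Finset.mem_erase.2 ⟨hi s φ hφ, Finset.mem_univ _⟩
  refine hS.not_ge ((Finset.card_le_card hsub).trans_eq ?_)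
  simp only [Fintype.card_piFinset, Finset.card_erase_of_mem (Finset.mem_univ _),
    Finset.card_univ, Finset.prod_const]

lemma exists_eval_surjective_on_fiber {J ι γ : Type*} [Fintype J] [Fintype ι] [Fintype γ]
    (f : (J → ι) → γ)
    (hcard : Fintype.card γ * (Fintype.card ι - 1) ^ Fintype.card J
      < Fintype.card ι ^ Fintype.card J) :
    ∃ (s : J) (r : γ) (φ : ι → J → ι), ∀ i, φ i s = i ∧ f (φ i) = r := by
  classical
  obtain ⟨r, hr⟩ := Fintype.exists_lt_card_fiber_of_mul_lt_card f
    (hcard.trans_eq Fintype.card_fun.symm)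
  obtain ⟨s, hs⟩ := exists_eval_surjective_of_card_lt _ hr
  choose φ hφ hφs using hs
  exact ⟨s, r, φ, fun i => ⟨hφs i, (Finset.mem_filter.1 (hφ i)).2⟩⟩

lemma exists_mul_pow_lt_pow {R : Type*} [Field R] [LinearOrder R] [IsStrictOrderedRing R]
    [Archimedean R] {a k : R} (ha : 0 ≤ a) (hak : a < k) (M : R) :
    ∃ m : ℕ, M * a ^ m < k ^ m := by
  have hk : 0 < k := ha.trans_lt hak
  obtain ⟨m, hm⟩ := exists_pow_lt_of_lt_one (inv_pos.2 (by positivity : 0 < |M| + 1))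
    ((div_lt_one hk).2 hak)
  refine ⟨m, ?_⟩
  rw [div_pow, div_lt_iff₀ (pow_pos hk m), inv_mul_eq_div, lt_div_iff₀' (by positivity)] at hm
  calc M * a ^ m ≤ (|M| + 1) * a ^ m := by gcongr; linarith [le_abs_self M]
    _ < k ^ m := hm

lemma pow_mul_pow_lt_pow {R : Type*} [CommSemiring R] [LinearOrder R] [IsStrictOrderedRing R]
    {M a k : R} (hM : 0 ≤ M) (ha : 0 ≤ a) (hak : a < k) {m b j : ℕ} (hm : M * a ^ m ≤ k ^ m)
    (hj : m * b < j) : M ^ b * a ^ j < k ^ j := by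
  have hk : 0 < k := ha.trans_lt hak
  obtain ⟨r, rfl⟩ := Nat.exists_eq_add_of_lt hj
  calc M ^ b * a ^ (m * b + r + 1) = (M * a ^ m) ^ b * a ^ (r + 1) := by ring
    _ ≤ (k ^ m) ^ b * a ^ (r + 1) := by gcongr
    _ < (k ^ m) ^ b * k ^ (r + 1) := by gcongr
    _ = k ^ (m * b + r + 1) := by ring

end Counting

lemma MeanTMP.exists_isMemorySet_mul_card_lt {G X : Type*} [Group G] [DecidableEq G]
    [MulAction G X] [PseudoMetricSpace X] (h : MeanTMP G X) {ε : ℝ} (hε : 0 < ε) :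
    ∃ δ > (0 : ℝ), ∀ C : ℝ, ∃ A B : Finset G,
      IsMemorySet G X ε δ A B ∧ C * (B \ A).card < A.card := by
  obtain ⟨δ, hδ, F, hmono, hcover, F', hmem, hlim⟩ := h ε hε
  refine ⟨δ, hδ, fun C => ?_⟩
  obtain ⟨N, hN⟩ : ∃ N, (1 : G) ∈ F N := by
    simpa using Set.eq_univ_iff_forall.1 hcover 1
  have hratio : ∀ᶠ n in Filter.atTop, C * (((F' n \ F n).card : ℝ) / (F n).card) < 1 :=
    (hlim.const_mul C).eventually (gt_mem_nhds (by simp))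
  obtain ⟨n, hn, hNn⟩ := (hratio.and (Filter.eventually_ge_atTop N)).exists
  have hpos : (0 : ℝ) < (F n).card := Nat.cast_pos.2 (Finset.card_pos.2 ⟨1, hmono hNn hN⟩)
  refine ⟨F n, F' n, hmem n, ?_⟩
  rwa [← mul_div_assoc, div_lt_one hpos] at hn

lemma IsMemorySet.exists_epsAsymTuple {G X κ : Type*} [Group G] [DecidableEq G] [MulAction G X]
    [PseudoMetricSpace X] [BoundedSpace X] [Fintype κ] {ε δ : ℝ} {A B J : Finset G}
    (hB : IsMemorySet G X ε δ A B) (hε : 0 ≤ ε) (hδ : 0 ≤ δ)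
    {c : X → κ} (hc : ∀ y z, c y = c z → dist y z ≤ δ)
    {k : ℕ} {U : Fin (k + 1) → Set X} (hJ : IndepSet U (J : Set G)) (hne : J.Nonempty)
    (hJA : J ⊆ A) (hcard : Fintype.card κ ^ (B \ A).card * k ^ J.card < (k + 1) ^ J.card) :
    ∃ t : Fin (k + 1) → X, EpsAsymTuple G (2 * ε) t ∧ ∀ i, ∃ w ∈ U i, dist w (t i) ≤ ε := by
  choose p hp using hJ.exists_forall_smul_mem hne
  obtain ⟨s, r, φ, hφ⟩ := exists_eval_surjective_on_fiber
    (fun (ψ : J → Fin (k + 1)) (b : ↥(B \ A)) => c ((b : G) • p ψ)) (by simpa using hcard)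
  have hclose : ∀ i, ∀ g ∈ B, g ∉ A → dist (g • p (φ i)) (g • p (φ 0)) ≤ δ :=
    fun i g hgB hgA => hc _ _ <|
      congrFun ((hφ i).2.trans (hφ 0).2.symm) ⟨g, Finset.mem_sdiff.2 ⟨hgB, hgA⟩⟩
  choose z hnear hfar using fun i => hB.exists_glue hε hδ (hclose i)
  have hz : EpsAsymTuple G (2 * ε) z := ⟨A, fun g hg i j => by
    linarith [dist_triangle_left (g • z i) (g • z j) (g • p (φ 0)), hfar i g hg, hfar j g hg]⟩
  refine ⟨(s : G) • z, hz.smul s, fun i => ⟨(s : G) • p (φ i), ?_, hnear i s (hB.1 (hJA s.2))⟩⟩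
  simpa only [(hφ i).1] using hp (φ i) s

theorem stmt12_general {G X : Type*} [Group G] [DecidableEq G] [PseudoMetricSpace X]
    [MulAction G X] (hX : TotallyBounded (Set.univ : Set X)) (hmtmp : MeanTMP G X) {k : ℕ}
    {ε : ℝ} (hε : 0 < ε) {x : Fin k → X} (hx : IETuple G x) :
    x ∈ closure {t : Fin k → X | EpsAsymTuple G ε t} := by
  obtain _ | k := k
  · exact subset_closure ⟨∅, fun _ _ i => i.elim0⟩
  have : BoundedSpace X := ⟨hX.isBounded⟩
  refine Metric.mem_closure_iff.2 fun η hη => ?_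
  have hε' : 0 < min ε η / 2 := half_pos (lt_min hε hη)
  obtain ⟨δ, hδ, hmem⟩ := hmtmp.exists_isMemorySet_mul_card_lt hε'
  obtain ⟨M, c, hc⟩ := exists_coloring_of_totallyBounded hX hδ
  obtain ⟨q, hq, hindep⟩ := hx (fun i => Metric.ball (x i) (η / 2))
    (fun _ => Metric.isOpen_ball) fun _ => Metric.mem_ball_self (half_pos hη)
  obtain ⟨m, hm⟩ := exists_mul_pow_lt_pow (Nat.cast_nonneg k) (lt_add_one (k : ℝ)) M
  obtain ⟨A, B, hB, hBA⟩ := hmem (m / q)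
  obtain ⟨J, hJA, hqJ, hJ⟩ := hindep A
  have hmJ : m * (B \ A).card < J.card := by
    rw [div_mul_eq_mul_div, div_lt_iff₀' hq] at hBA
    exact_mod_cast hBA.trans_le hqJ
  have hcard : M ^ (B \ A).card * k ^ J.card < (k + 1) ^ J.card := by
    exact_mod_cast pow_mul_pow_lt_pow (Nat.cast_nonneg M) (Nat.cast_nonneg k)
      (lt_add_one (k : ℝ)) hm.le hmJ
  obtain ⟨t, ht, hnear⟩ := hB.exists_epsAsymTuple hε'.le hδ.le (fun y z h => (hc y z h).le) hJ
    (Finset.card_pos.1 (Nat.zero_lt_of_lt hmJ)) hJA (by simpa using hcard)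
  refine ⟨t, ht.mono (by linarith [min_le_left ε η]), (dist_pi_lt_iff hη).2 fun i => ?_⟩
  obtain ⟨w, hw, hwt⟩ := hnear i
  linarith [dist_triangle_left (x i) (t i) w, Metric.mem_ball.1 hw, min_le_right ε η]

/-- Let `G ↷ X` be an action with the mean TMP.  Then for every `k ≥ 2` and
every `ε > 0`, every orbit IE-tuple of length `k` lies in the closure of the set of
`ε`-asymptotic `k`-tuples. -/
theorem stmt12 (G X : Type*) [Group G] [Countable G] [Infinite G] [DecidableEq G]
    [MetricSpace X] [CompactSpace X] [MulAction G X]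
    (hcont : ∀ g : G, Continuous fun x : X => g • x)
    (hmtmp : MeanTMP G X) :
    ∀ k : ℕ, 2 ≤ k → ∀ ε > (0 : ℝ), ∀ x : Fin k → X, IETuple G x →
      x ∈ closure {t : Fin k → X | EpsAsymTuple G ε t} :=
  fun _ _ _ hε _ hx => stmt12_general isCompact_univ.totallyBounded hmtmp hε hx
end
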